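/- arXiv:1701.00465 — 2 statements merged into one kernel-verified Lean document; each statement's English description precedes it below -/
import Mathlib

section
/- Let $k, r \in \mathbb{N}$ and let $E$ be the set of $r$-element subsets of $\{1, \dots, 2r+k\}$. If $E = \bigcup_{j=1}^k E_j$, then there exist $j \leq k$ and two disjoint sets $e_1, e_2 \in E_j$. -/
namespace KneserAux

variable {V : Type*} [DecidableEq V]

/-- Parity of the number of alternating flags ending at the signed set `(D, A)`
(support `D`, positive part `A`), where `D` has `m + 1` elements. -/
def cnt (s : Finset V → Finset V → ZMod 2) : ℕ → Finset V → Finset V → ZMod 2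
  | 0, _, _ => 1
  | m + 1, D, A => ∑ j ∈ D, s (D.erase j) (A.erase j) * cnt s m (D.erase j) (A.erase j)

lemma two_self (x : ZMod 2) : x + x = 0 := CharTwo.add_self_eq_zero x

lemma sum_symm (D : Finset V) (h : V → V → ZMod 2) (hh : ∀ i j, h i j = h j i) :
    ∑ j ∈ D, ∑ l ∈ D.erase j, h j l = 0 := by
  rw [Finset.sum_sigma']
  refine Finset.sum_involution (fun p _ => ⟨p.2, p.1⟩) ?_ ?_ ?_ ?_
  · rintro ⟨i, j⟩ _
    simp only
    rw [hh i j]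
    exact two_self _
  · rintro ⟨i, j⟩ hp _ heq
    simp only [Finset.mem_sigma, Finset.mem_erase] at hp
    simp only [Sigma.mk.injEq] at heq
    exact hp.2.1 heq.1
  · rintro ⟨i, j⟩ hp
    simp only [Finset.mem_sigma, Finset.mem_erase] at hp ⊢
    exact ⟨hp.2.2, fun h => hp.2.1 h.symm, hp.1⟩
  · rintro ⟨i, j⟩ _
    rfl

lemma sum_cnt (s : Finset V → Finset V → ZMod 2) (m : ℕ) (D A : Finset V)
    (hD : D.card = m + 2) : ∑ j ∈ D, cnt s m (D.erase j) (A.erase j) = 0 := by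
  cases m with
  | zero =>
    simp only [cnt, Finset.sum_const, hD]
    decide
  | succ m =>
    simp only [cnt]
    apply sum_symm D (fun j l => s ((D.erase j).erase l) ((A.erase j).erase l) *
      cnt s m ((D.erase j).erase l) ((A.erase j).erase l))
    intro i j
    simp only [Finset.erase_right_comm (a := i) (b := j)]

lemma erase_sdiff_erase' (D A : Finset V) (j : V) :
    (D \ A).erase j = D.erase j \ A.erase j := by
  ext x
  simp only [Finset.mem_erase, Finset.mem_sdiff]
  tauto

lemma cnt_neg (s : Finset V → Finset V → ZMod 2)
    (hs : ∀ D A : Finset V, D.Nonempty → A ⊆ D → s D (D \ A) = s D A + 1)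
    (m : ℕ) : ∀ D A : Finset V, D.card = m + 1 → A ⊆ D → cnt s m D (D \ A) = cnt s m D A := by
  induction m with
  | zero => intros; rfl
  | succ m ih =>
    intro D A hD hA
    have h0 := sum_cnt s m D A hD
    simp only [cnt]
    rw [← add_zero (∑ j ∈ D, s (D.erase j) (A.erase j) * _), ← h0, ← Finset.sum_add_distrib]
    refine Finset.sum_congr rfl fun j hj => ?_
    have hc : (D.erase j).card = m + 1 := by rw [Finset.card_erase_of_mem hj]; omega
    have hAj : A.erase j ⊆ D.erase j := Finset.erase_subset_erase _ hA
    rw [erase_sdiff_erase', ih _ _ hc hAj,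
      hs _ _ (Finset.card_pos.1 (by omega)) hAj]
    ring

lemma sum_erase_zero (D : Finset V) (j : V) (hj : j ∈ D) (g : Finset V → ZMod 2) :
    ∑ A ∈ D.powerset, g (A.erase j) = 0 := by
  obtain ⟨D', hj', rfl⟩ : ∃ D', j ∉ D' ∧ insert j D' = D :=
    ⟨D.erase j, Finset.notMem_erase _ _, Finset.insert_erase hj⟩
  rw [Finset.sum_powerset_insert hj', ← Finset.sum_add_distrib]
  refine Finset.sum_eq_zero fun A hA => ?_
  have : j ∉ A := fun h => hj' (Finset.mem_powerset.1 hA h)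
  rw [Finset.erase_insert this, Finset.erase_eq_of_notMem this]
  exact two_self _

lemma total (s : Finset V → Finset V → ZMod 2)
    (hs : ∀ D A : Finset V, D.Nonempty → A ⊆ D → s D (D \ A) = s D A + 1)
    (m : ℕ) : ∀ D : Finset V, D.card = m + 1 →
      ∑ A ∈ D.powerset, s D A * cnt s m D A = 1 := by
  have key : ∀ (m : ℕ) (i : V) (D : Finset V), i ∉ D → D.card = m →
      ∑ A ∈ (insert i D).powerset, s (insert i D) A * cnt s m (insert i D) A =
      ∑ A ∈ D.powerset, cnt s m (insert i D) A := by
    intro m i D hi hD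
    rw [Finset.sum_powerset_insert hi]
    have : ∑ A ∈ D.powerset, s (insert i D) (insert i A) * cnt s m (insert i D) (insert i A) =
        ∑ A ∈ D.powerset, (s (insert i D) A + 1) * cnt s m (insert i D) A := by
      refine Finset.sum_bij' (fun A _ => D \ A) (fun A _ => D \ A) ?_ ?_ ?_ ?_ ?_
      · intro A _; simp
      · intro A _; simp
      · intro A hA; exact Finset.sdiff_sdiff_eq_self (Finset.mem_powerset.1 hA)
      · intro A hA; exact Finset.sdiff_sdiff_eq_self (Finset.mem_powerset.1 hA)
      · intro A hA
        have hA' := Finset.mem_powerset.1 hA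
        have hsub : D \ A ⊆ insert i D := fun x hx =>
          Finset.mem_insert_of_mem (Finset.mem_sdiff.1 hx).1
        have e : insert i A = insert i D \ (D \ A) := by
          ext x
          simp only [Finset.mem_insert, Finset.mem_sdiff]
          by_cases hx : x = i
          · subst hx; simp [hi]
          · have := @hA' x
            simp only [hx, false_or]
            tauto
        rw [e, hs _ _ (Finset.insert_nonempty _ _) hsub,
          cnt_neg s hs m _ _ (by rw [Finset.card_insert_of_notMem hi, hD]) hsub]
    rw [this, ← Finset.sum_add_distrib]
    refine Finset.sum_congr rfl fun A _ => ?_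
    rw [add_mul, ← add_assoc, two_self, zero_add, one_mul]
  induction m with
  | zero =>
    intro D hD
    obtain ⟨i, rfl⟩ := Finset.card_eq_one.1 hD
    have := key 0 i ∅ (by simp) (by simp)
    simpa [cnt] using this
  | succ m ih =>
    intro D hD
    obtain ⟨i, hi⟩ : D.Nonempty := Finset.card_pos.1 (by omega)
    obtain ⟨D', hi', rfl⟩ : ∃ D', i ∉ D' ∧ insert i D' = D :=
      ⟨D.erase i, Finset.notMem_erase _ _, Finset.insert_erase hi⟩
    have hD' : D'.card = m + 1 := by
      rw [Finset.card_insert_of_notMem hi'] at hD; omega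
    rw [key (m + 1) i D' hi' hD', ← ih D' hD']
    simp only [cnt]
    rw [Finset.sum_comm, Finset.sum_insert hi', Finset.erase_insert hi']
    have : ∑ j ∈ D', ∑ A ∈ D'.powerset, s ((insert i D').erase j) (A.erase j) *
        cnt s m ((insert i D').erase j) (A.erase j) = 0 :=
      Finset.sum_eq_zero fun j hj => sum_erase_zero D' j hj
        (fun B => s ((insert i D').erase j) B * cnt s m ((insert i D').erase j) B)
    rw [this, add_zero]
    refine Finset.sum_congr rfl fun A hA => ?_
    rw [Finset.erase_eq_of_notMem (fun h => hi' (Finset.mem_powerset.1 hA h))]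

lemma descend (s : Finset V → Finset V → ZMod 2) (m : ℕ) (D A : Finset V)
    (hD : D.card = m + 2) (h : cnt s (m + 1) D A ≠ 0) :
    ∃ j ∈ D, s (D.erase j) (A.erase j) ≠ s D A ∧ cnt s m (D.erase j) (A.erase j) ≠ 0 := by
  have h1 : cnt s (m + 1) D A =
      ∑ j ∈ D, (s (D.erase j) (A.erase j) + s D A) * cnt s m (D.erase j) (A.erase j) := by
    simp only [add_mul, Finset.sum_add_distrib, ← Finset.mul_sum, sum_cnt s m D A hD, mul_zero,
      add_zero, cnt]
  rw [h1] at h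
  obtain ⟨j, hj, hne⟩ := Finset.exists_ne_zero_of_sum_ne_zero h
  refine ⟨j, hj, fun he => hne ?_, right_ne_zero_of_mul hne⟩
  rw [he, two_self, zero_mul]

/-- The `r`-sets contained in the positive or in the negative part. -/
def fam (r : ℕ) (D A : Finset V) : Finset (Finset V) :=
  A.powersetCard r ∪ (D \ A).powersetCard r

lemma fam_nonempty (r : ℕ) (D A : Finset V) (hA : A ⊆ D) (hD : 2 * r ≤ D.card) :
    (fam r D A).Nonempty := by
  have := Finset.card_sdiff_add_card_eq_card hA
  rcases le_or_gt r A.card with h | h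
  · exact (Finset.powersetCard_nonempty.2 h).mono Finset.subset_union_left
  · exact (Finset.powersetCard_nonempty.2 (by omega : r ≤ (D \ A).card)).mono
      Finset.subset_union_right

/-- Largest color occurring. -/
def top (r : ℕ) (c : Finset V → ℕ) (D A : Finset V) : ℕ := (fam r D A).sup c

open Classical in
/-- The sign labelling. -/
noncomputable def sgn (r : ℕ) (c : Finset V → ℕ) (D A : Finset V) : ZMod 2 :=
  if 2 * r ≤ D.card then
    (if ∃ e ⊆ A, e.card = r ∧ c e = top r c D A then 1 else 0)
  else (if ∃ h : D.Nonempty, h.choose ∈ A then 1 else 0)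

lemma top_neg (r : ℕ) (c : Finset V → ℕ) (D A : Finset V) (hA : A ⊆ D) :
    top r c D (D \ A) = top r c D A := by
  unfold top fam
  rw [Finset.sdiff_sdiff_eq_self hA, Finset.union_comm]

lemma top_attained (r : ℕ) (c : Finset V → ℕ) (D A : Finset V) (hA : A ⊆ D)
    (hD : 2 * r ≤ D.card) :
    (∃ e ⊆ A, e.card = r ∧ c e = top r c D A) ∨
    (∃ e ⊆ D \ A, e.card = r ∧ c e = top r c D A) := by
  obtain ⟨e, he, h⟩ := Finset.exists_mem_eq_sup _ (fam_nonempty r D A hA hD) c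
  rcases Finset.mem_union.1 he with he | he <;> rw [Finset.mem_powersetCard] at he
  · exact Or.inl ⟨e, he.1, he.2, h.symm⟩
  · exact Or.inr ⟨e, he.1, he.2, h.symm⟩

lemma sgn_neg (r : ℕ) (c : Finset V → ℕ)
    (hc : ∀ e₁ e₂ : Finset V, e₁.card = r → e₂.card = r → Disjoint e₁ e₂ → c e₁ ≠ c e₂)
    (D A : Finset V) (hne : D.Nonempty) (hA : A ⊆ D) :
    sgn r c D (D \ A) = sgn r c D A + 1 := by
  unfold sgn
  split_ifs with h1 h2 h3 h3 h2 h3 h3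
  · exfalso
    obtain ⟨e, he, hr, h⟩ := h2
    obtain ⟨e', he', hr', h'⟩ := h3
    rw [top_neg r c D A hA] at h
    exact hc e e' hr hr' (Finset.disjoint_of_subset_left he
      (Finset.disjoint_of_subset_right he' Finset.sdiff_disjoint)) (h.trans h'.symm)
  · decide
  · decide
  · exfalso
    rw [top_neg r c D A hA] at h2
    rcases top_attained r c D A hA h1 with h | h
    · exact h3 h
    · exact h2 h
  · exfalso
    obtain ⟨_, h2⟩ := h2
    obtain ⟨_, h3⟩ := h3
    exact (Finset.mem_sdiff.1 h2).2 h3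
  · decide
  · decide
  · exfalso
    exact h2 ⟨hne, Finset.mem_sdiff.2 ⟨hne.choose_spec, fun h => h3 ⟨hne, h⟩⟩⟩

lemma top_lt (r : ℕ) (c : Finset V → ℕ)
    (hc : ∀ e₁ e₂ : Finset V, e₁.card = r → e₂.card = r → Disjoint e₁ e₂ → c e₁ ≠ c e₂)
    (D A : Finset V) (j : V) (hA : A ⊆ D) (hD : 2 * r ≤ (D.erase j).card)
    (hs : sgn r c (D.erase j) (A.erase j) ≠ sgn r c D A) :
    top r c (D.erase j) (A.erase j) < top r c D A := by
  have hD' : 2 * r ≤ D.card := hD.trans (Finset.card_le_card (Finset.erase_subset _ _))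
  have s1 : A.erase j ⊆ A := Finset.erase_subset _ _
  have s2 : D.erase j \ A.erase j ⊆ D \ A := by
    rw [← erase_sdiff_erase']; exact Finset.erase_subset _ _
  refine lt_of_le_of_ne (Finset.sup_mono (Finset.union_subset_union
    (Finset.powersetCard_mono s1) (Finset.powersetCard_mono s2))) fun heq => hs ?_
  unfold sgn
  rw [if_pos hD, if_pos hD', heq]
  congr 1
  rw [eq_iff_iff]
  constructor
  · rintro ⟨e, he, h⟩
    exact ⟨e, he.trans s1, h⟩
  · rintro ⟨e, he, hr, h⟩
    rcases top_attained r c (D.erase j) (A.erase j) (Finset.erase_subset_erase _ hA) hD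
      with h' | ⟨e', he', hr', h'⟩
    · rwa [heq] at h'
    · exfalso
      rw [heq] at h'
      exact hc e e' hr hr' (Finset.disjoint_of_subset_left he
        (Finset.disjoint_of_subset_right (he'.trans s2) Finset.disjoint_sdiff)) (h.trans h'.symm)

lemma le_top (r : ℕ) (hr : 0 < r) (c : Finset V → ℕ)
    (hc : ∀ e₁ e₂ : Finset V, e₁.card = r → e₂.card = r → Disjoint e₁ e₂ → c e₁ ≠ c e₂)
    (t : ℕ) : ∀ (m : ℕ) (D A : Finset V), A ⊆ D → D.card = 2 * r + t → D.card = m + 1 →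
      cnt (sgn r c) m D A ≠ 0 → t ≤ top r c D A := by
  induction t with
  | zero => intros; exact Nat.zero_le _
  | succ t ih =>
    intro m D A hA hD hm h
    obtain ⟨m, rfl⟩ : ∃ m', m = m' + 1 := ⟨m - 1, by omega⟩
    obtain ⟨j, hj, hs, h'⟩ := descend _ m D A hm h
    have hcard := Finset.card_erase_of_mem hj
    have h1 := ih m (D.erase j) (A.erase j) (Finset.erase_subset_erase _ hA)
      (by omega) (by omega) h'
    have h2 := top_lt r c hc D A j hA (by omega) hs
    omega

end KneserAux

/-- Lovász's theorem on Kneser graph colorings. -/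
theorem stmt2 (k r : ℕ) (hk : 0 < k) (hr : 0 < r)
    (E : Fin k → Set (Finset (Fin (2 * r + k))))
    (hsub : ∀ j, ∀ e ∈ E j, e.card = r)
    (hcover : ∀ e : Finset (Fin (2 * r + k)), e.card = r → ∃ j, e ∈ E j) :
    ∃ j : Fin k, ∃ e₁ ∈ E j, ∃ e₂ ∈ E j,
      e₁.card = r ∧ e₂.card = r ∧ e₁ ≠ e₂ ∧ Disjoint e₁ e₂ := by
  classical
  by_contra hcon
  choose f hf using hcover
  let c : Finset (Fin (2 * r + k)) → ℕ := fun e => if h : e.card = r then (f e h : ℕ) else 0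
  have hck : ∀ e, c e < k := by
    intro e
    simp only [c]
    split_ifs
    · exact Fin.is_lt _
    · exact hk
  have hc : ∀ e₁ e₂ : Finset (Fin (2 * r + k)), e₁.card = r → e₂.card = r →
      Disjoint e₁ e₂ → c e₁ ≠ c e₂ := by
    intro e₁ e₂ h1 h2 hd heq
    simp only [c, dif_pos h1, dif_pos h2] at heq
    have heq' := Fin.ext heq
    refine hcon ⟨f e₁ h1, e₁, hf e₁ h1, e₂, heq' ▸ hf e₂ h2, h1, h2, ?_, hd⟩
    rintro rfl
    rw [disjoint_self] at hd
    subst hd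
    simp at h1
    omega
  have hcard : (Finset.univ : Finset (Fin (2 * r + k))).card = (2 * r + k - 1) + 1 := by
    simp; omega
  have ht := KneserAux.total (KneserAux.sgn r c) (KneserAux.sgn_neg r c hc) _ _ hcard
  obtain ⟨A, hA, hne⟩ := Finset.exists_ne_zero_of_sum_ne_zero (ht.trans_ne one_ne_zero)
  have h1 := KneserAux.le_top r hr c hc k _ _ A (Finset.subset_univ _) (by simp) hcard
    (right_ne_zero_of_mul hne)
  have h2 : KneserAux.top r c Finset.univ A < k :=
    (Finset.sup_lt_iff hk).2 fun e _ => hck e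
  omega
end

section
/- Let $G$ be a countable abelian group. If $S \subseteq G$ is equidistributed, then $S$ is a set of optimal recurrence: for every measure preserving $G$-system $(X,\mu,T)$, every measurable $D \subseteq X$, and every $c < \mu(D)^2$, there exists $g \in S$ with $\mu(D \cap T^g D) > c$. -/
open MeasureTheory Filter

/-- `S` is equidistributed: there are finite subsets `S_j ⊆ S` along which the averages of
every non-constant character `χ : G → 𝕊¹` tend to `0`. -/
def Equidistributed {G : Type*} [AddCommGroup G] (S : Set G) : Prop :=
  ∃ Sj : ℕ → Finset G, (∀ j, (Sj j : Set G) ⊆ S) ∧ (∀ j, (Sj j).Nonempty) ∧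
    ∀ χ : G → ℂ, (∀ g h, χ (g + h) = χ g * χ h) → (∀ g, ‖χ g‖ = 1) →
      (∃ g, χ g ≠ 1) →
      Tendsto (fun j => (∑ g ∈ Sj j, χ g) / ((Sj j).card : ℂ)) atTop (nhds 0)

open CompactlySupported in
lemma lem1 {G : Type*} [AddCommGroup G] {A : Type*} [CommCStarAlgebra A]
    (ψ : A →ₗ[ℂ] ℂ) (hpos : ∀ a, 0 ≤ (ψ (star a * a)).re) (hstar : ∀ a, (ψ (star a)).re = (ψ a).re)
    (V : G → A) (hV : ∀ g h, V (g + h) = V g * V h) (hV0 : V 0 = 1) (hVs : ∀ g, star (V g) = V (-g))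
    (Sj : ℕ → Finset G) (hne : ∀ j, (Sj j).Nonempty)
    (hS : ∀ χ : G → ℂ, (∀ g h, χ (g + h) = χ g * χ h) → (∀ g, ‖χ g‖ = 1) →
      (∃ g, χ g ≠ 1) →
      Tendsto (fun j => (∑ g ∈ Sj j, χ g) / ((Sj j).card : ℂ)) atTop (nhds 0)) :
    ∃ L : ℝ, 0 ≤ L ∧ 
      Tendsto (fun j => (∑ g ∈ Sj j, (ψ (V g)).re) / ((Sj j).card : ℝ)) atTop (nhds L) := by
  classical
  let Ω := WeakDual.characterSpace ℂ A
  let : MeasurableSpace Ω := borel Ω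
  have : BorelSpace Ω := ⟨rfl⟩
  let Γ : A ≃⋆ₐ[ℂ] C(Ω, ℂ) := gelfandStarTransform A
  let em : C(Ω, ℝ) → C(Ω, ℂ) := fun φ => ⟨fun ω => (φ ω : ℂ), by fun_prop⟩
  let Λ : C_c(Ω, ℝ) →ₚ[ℝ] ℝ := PositiveLinearMap.mk₀
    { toFun := fun φ => (ψ (Γ.symm (em φ.toContinuousMap))).re
      map_add' := by
        intro x y
        have : em (x + y).toContinuousMap = em x.toContinuousMap + em y.toContinuousMap := by
          ext ω; simp [em]
        simp only [this, map_add, Complex.add_re]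
      map_smul' := by
        intro r x
        have : em (r • x).toContinuousMap = (r : ℂ) • em x.toContinuousMap := by
          ext ω; simp [em]
        simp only [this, map_smul]
        simp }
    (by
      intro φ hφ
      have : em φ.toContinuousMap = star (em ⟨fun ω => Real.sqrt (φ ω), by fun_prop⟩) * 
          (em ⟨fun ω => Real.sqrt (φ ω), by fun_prop⟩) := by
        ext ω
        have h0 : 0 ≤ φ ω := hφ ω
        simp only [em, ContinuousMap.coe_mk, ContinuousMap.mul_apply, ContinuousMap.star_apply]
        simp [← Complex.ofReal_mul, Real.mul_self_sqrt h0]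
      simp only [LinearMap.coe_mk, AddHom.coe_mk, this, map_mul, map_star]
      exact hpos _)
  let ν := RealRMK.rieszMeasure Λ
  have : IsFiniteMeasure ν := by
    constructor
    let φ : C_c(Ω, ℝ) := ⟨⟨fun ω => 1, by fun_prop⟩, HasCompactSupport.of_compactSpace _⟩
    have := RealRMK.rieszMeasure_le_of_eq_one Λ (f := φ) (fun _ => zero_le_one)
      (K := Set.univ) isCompact_univ (fun _ _ => rfl)
    exact this.trans_lt ENNReal.ofReal_lt_top
  have key : ∀ a : A, ∫ ω, (Γ a ω).re ∂ν = (ψ a).re := by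
    intro a
    let φ : C_c(Ω, ℝ) := ⟨⟨fun ω => (Γ a ω).re, by fun_prop⟩, HasCompactSupport.of_compactSpace _⟩
    have h1 : ∫ ω, φ ω ∂ν = Λ φ := RealRMK.integral_rieszMeasure Λ φ
    have h2 : em φ.toContinuousMap = Γ ((1/2 : ℂ) • (a + star a)) := by
      ext ω
      rw [map_smul, map_add, map_star]
      simp only [em, φ, ContinuousMap.coe_mk, ContinuousMap.smul_apply, ContinuousMap.add_apply, ContinuousMap.star_apply]
      rw [Complex.star_def, Complex.add_conj]
      simp
    have h3 : Λ φ = (ψ (Γ.symm (em φ.toContinuousMap))).re := rfl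
    rw [h2, StarAlgEquiv.symm_apply_apply, map_smul, map_add] at h3
    have h4 := hstar a
    have : Λ φ = (ψ a).re := by
      rw [h3]
      simp [h4]
      ring
    rw [← this, ← h1]
    rfl
  have hχa : ∀ ω g h, Γ (V (g + h)) ω = Γ (V g) ω * Γ (V h) ω := by
    intro ω g h; rw [hV, map_mul]; rfl
  have hχ0 : ∀ ω, Γ (V 0) ω = 1 := by
    intro ω; rw [hV0, map_one]; rfl
  have hχn : ∀ ω g, ‖Γ (V g) ω‖ = 1 := by
    intro ω g
    have h1 : star (Γ (V g) ω) * Γ (V g) ω = 1 := by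
      rw [← hχ0 ω, ← neg_add_cancel g, hχa, ← hVs, map_star]; rfl
    have h2 := CStarRing.norm_star_mul_self (x := Γ (V g) ω)
    rw [h1, norm_one] at h2
    nlinarith [norm_nonneg (Γ (V g) ω)]
  let lim : Ω → ℝ := fun ω => if ∃ g, Γ (V g) ω ≠ 1 then 0 else 1
  refine ⟨∫ ω, lim ω ∂ν, integral_nonneg (fun ω => by simp only [lim]; split_ifs <;> simp), ?_⟩
  have hF : ∀ j, (∑ g ∈ Sj j, (ψ (V g)).re) / ((Sj j).card : ℝ) = 
      ∫ ω, ((∑ g ∈ Sj j, Γ (V g) ω) / ((Sj j).card : ℂ)).re ∂ν := by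
    intro j
    have := key ((((Sj j).card : ℂ)⁻¹) • ∑ g ∈ Sj j, V g)
    rw [map_smul, map_sum, map_smul, map_sum] at this
    convert this.symm using 1
    · rw [smul_eq_mul, ← Complex.ofReal_natCast, ← Complex.ofReal_inv, Complex.re_ofReal_mul, Complex.re_sum]
      ring
    · congr 1; ext ω
      simp [div_eq_inv_mul]
  simp_rw [hF]
  refine tendsto_integral_of_dominated_convergence (fun _ => (1:ℝ)) ?_ (integrable_const _) ?_ ?_
  · intro j
    apply Continuous.aestronglyMeasurable
    fun_prop
  · intro j
    refine ae_of_all _ fun ω => ?_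
    have hc : (0:ℝ) < (Sj j).card := by exact_mod_cast (hne j).card_pos
    refine (Complex.abs_re_le_norm _).trans ?_
    rw [norm_div, Complex.norm_natCast, div_le_one hc]
    refine (norm_sum_le _ _).trans ?_
    simp [hχn]
  · refine ae_of_all _ fun ω => ?_
    by_cases h : ∃ g, Γ (V g) ω ≠ 1
    · have := hS (fun g => Γ (V g) ω) (hχa ω) (hχn ω) h
      simp only [lim, if_pos h]
      exact (Complex.continuous_re.tendsto 0).comp this
    · simp only [lim, if_neg h]
      push Not at h
      refine tendsto_const_nhds.congr fun j => ?_
      have hc : ((Sj j).card : ℂ) ≠ 0 := by exact_mod_cast (hne j).card_pos.ne'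
      simp [h, hc]

lemma lem2 {G : Type*} [AddCommGroup G] {H : Type*} [NormedAddCommGroup H] [InnerProductSpace ℂ H]
    [CompleteSpace H] (U : G → H →L[ℂ] H)
    (hU : ∀ g h, U (g + h) = U g * U h) (hU0 : U 0 = 1) (hUs : ∀ g, star (U g) = U (-g)) (v : H)
    (Sj : ℕ → Finset G) (hne : ∀ j, (Sj j).Nonempty)
    (hS : ∀ χ : G → ℂ, (∀ g h, χ (g + h) = χ g * χ h) → (∀ g, ‖χ g‖ = 1) →
      (∃ g, χ g ≠ 1) →
      Tendsto (fun j => (∑ g ∈ Sj j, χ g) / ((Sj j).card : ℂ)) atTop (nhds 0)) :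
    ∃ L : ℝ, 0 ≤ L ∧ 
      Tendsto (fun j => (∑ g ∈ Sj j, (inner ℂ v (U g v)).re) / ((Sj j).card : ℝ))
        atTop (nhds L) := by
  have hc : ∀ g h, U g * U h = U h * U g := by
    intro g h; rw [← hU, ← hU, add_comm]
  let B := StarAlgebra.adjoin ℂ (Set.range U)
  have hB : IsMulCommutative B := StarAlgebra.isMulCommutative_adjoin ℂ
    (by rintro _ ⟨g, rfl⟩ _ ⟨h, rfl⟩; exact hc g h)
    (by rintro _ ⟨g, rfl⟩ _ ⟨h, rfl⟩; rw [hUs]; exact hc _ _)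
  let A := B.topologicalClosure
  let i1 : CStarAlgebra A := StarSubalgebra.cstarAlgebra _ (h_closed := B.isClosed_topologicalClosure)
  let i2 : CommRing A := StarSubalgebra.commRingTopologicalClosure B (fun x y => hB.is_comm.comm x y)
  let i3 : CommCStarAlgebra A := { i1, i2 with }
  let ψ : A →ₗ[ℂ] ℂ :=
    { toFun := fun a => inner ℂ v ((a : H →L[ℂ] H) v)
      map_add' := by
        intro x y
        exact inner_add_right _ _ _
      map_smul' := by
        intro r x
        exact inner_smul_right _ _ _ }
  have hmem : ∀ g, U g ∈ A := fun g =>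
    B.le_topologicalClosure (StarAlgebra.subset_adjoin ℂ _ ⟨g, rfl⟩)
  refine lem1 ψ ?_ ?_ (fun g => (⟨U g, hmem g⟩ : A)) ?_ ?_ ?_ Sj hne hS
  · intro a
    change 0 ≤ (inner ℂ v ((star (a : H →L[ℂ] H) * (a : H →L[ℂ] H)) v)).re
    rw [ContinuousLinearMap.mul_apply, ContinuousLinearMap.star_eq_adjoint,
      ContinuousLinearMap.adjoint_inner_right]
    exact inner_self_nonneg (𝕜 := ℂ)
  · intro a
    change (inner ℂ v ((star (a : H →L[ℂ] H)) v)).re = (inner ℂ v ((a : H →L[ℂ] H) v)).re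
    rw [ContinuousLinearMap.star_eq_adjoint, ContinuousLinearMap.adjoint_inner_right]
    exact inner_re_symm (𝕜 := ℂ) _ _
  · intro g h; exact Subtype.ext (hU g h)
  · exact Subtype.ext hU0
  · intro g; exact Subtype.ext (hUs g)

theorem stmt19 {G : Type*} [AddCommGroup G] [Countable G] (S : Set G)
    (hS : Equidistributed S)
    (X : Type) (_ : MeasurableSpace X) (μ : Measure X) (_ : IsProbabilityMeasure μ)
    (T : G → X → X) (hT : ∀ g, MeasurePreserving (T g) μ μ)
    (hadd : ∀ g h x, T (g + h) x = T g (T h x)) (hzero : ∀ x, T 0 x = x)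
    (D : Set X) (hD : MeasurableSet D) (c : ℝ) (hc : c < (μ D).toReal ^ 2) :
    ∃ g ∈ S, c < (μ (D ∩ T g '' D)).toReal := by
  obtain ⟨Sj, hsub, hne, hS⟩ := hS
  let H := Lp ℂ 2 μ
  let U : G → H →L[ℂ] H := fun g =>
    (Lp.compMeasurePreservingₗᵢ ℂ (T (-g)) (hT (-g))).toContinuousLinearMap
  have hUval : ∀ g (f : H), U g f = Lp.compMeasurePreserving (T (-g)) (hT (-g)) f := fun g f => rfl
  have hU : ∀ g h, U (g + h) = U g * U h := by
    intro g h
    ext1 f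
    rw [ContinuousLinearMap.mul_apply, hUval, hUval, hUval]
    apply Lp.ext
    have e1 := Lp.coeFn_compMeasurePreserving f (hT (-(g + h)))
    have e2 := Lp.coeFn_compMeasurePreserving
      (Lp.compMeasurePreserving (T (-h)) (hT (-h)) f) (hT (-g))
    have e3 := (hT (-g)).quasiMeasurePreserving.ae_eq_comp
      (Lp.coeFn_compMeasurePreserving f (hT (-h)))
    filter_upwards [e1, e2, e3] with x h1 h2 h3
    rw [h1, h2, h3]
    simp only [Function.comp_apply]
    rw [← hadd, neg_add_rev]
  have hU0 : U 0 = 1 := by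
    ext1 f
    rw [hUval]
    apply Lp.ext
    filter_upwards [Lp.coeFn_compMeasurePreserving f (hT (-0))] with x h1
    rw [h1]
    simp [hzero]
  have hUs : ∀ g, star (U g) = U (-g) := by
    intro g
    have h1 : star (U g) * U g = 1 := by
      ext1 f
      refine ext_inner_left ℂ fun w => ?_
      rw [ContinuousLinearMap.mul_apply, ContinuousLinearMap.star_eq_adjoint,
        ContinuousLinearMap.adjoint_inner_right]
      exact (Lp.compMeasurePreservingₗᵢ ℂ (T (-g)) (hT (-g))).inner_map_map w f
    calc star (U g) = star (U g) * (U g * U (-g)) := by rw [← hU, add_neg_cancel, hU0, mul_one]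
      _ = U (-g) := by rw [← mul_assoc, h1, one_mul]
  let f : H := indicatorConstLp 2 hD (measure_ne_top μ D) (1 : ℂ)
  let e : H := indicatorConstLp 2 MeasurableSet.univ (measure_ne_top μ Set.univ) (1 : ℂ)
  let a : ℝ := (μ D).toReal
  have hUf : ∀ g, U g f = indicatorConstLp 2 ((hT (-g)).measurable hD)
      (measure_ne_top μ _) (1 : ℂ) := fun g => by
    rw [hUval]; exact Lp.indicatorConstLp_compMeasurePreserving ..
  have hUe : ∀ g, U g e = e := fun g => by
    rw [hUval]; exact Lp.indicatorConstLp_compMeasurePreserving ..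
  have hinn : ∀ (A B : Set X) (hA : MeasurableSet A) (hB : MeasurableSet B),
      inner ℂ (indicatorConstLp 2 hA (measure_ne_top μ A) (1 : ℂ) : H)
        (indicatorConstLp 2 hB (measure_ne_top μ B) (1 : ℂ)) = ((μ (A ∩ B)).toReal : ℂ) := by
    intro A B hA hB
    rw [L2.inner_indicatorConstLp_indicatorConstLp]
    simp [Measure.real]
  have him : ∀ g, T g '' D = T (-g) ⁻¹' D := by
    intro g
    ext x
    constructor
    · rintro ⟨y, hy, rfl⟩
      rw [Set.mem_preimage, ← hadd, neg_add_cancel, hzero]; exact hy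
    · intro hx
      exact ⟨T (-g) x, hx, by rw [← hadd, add_neg_cancel, hzero]⟩
  have hff : ∀ g, inner ℂ f (U g f) = ((μ (D ∩ T g '' D)).toReal : ℂ) := by
    intro g; rw [hUf, hinn, him]
  have hef : ∀ g, inner ℂ e (U g f) = (a : ℂ) := by
    intro g; rw [hUf, hinn, Set.univ_inter, (hT (-g)).measure_preimage hD.nullMeasurableSet]
  have hfe : inner ℂ f e = (a : ℂ) := by
    rw [hinn, Set.inter_univ]
  have hee : inner ℂ e e = (1 : ℂ) := by
    rw [hinn]; simp
  have hvv : ∀ g, (inner ℂ (f - (a : ℂ) • e) (U g (f - (a : ℂ) • e))).re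
      = (μ (D ∩ T g '' D)).toReal - a ^ 2 := by
    intro g
    have : inner ℂ (f - (a : ℂ) • e) (U g (f - (a : ℂ) • e))
      = (((μ (D ∩ T g '' D)).toReal - a ^ 2 : ℝ) : ℂ) := by
      rw [map_sub, map_smul, hUe, inner_sub_left, inner_sub_right, inner_sub_right,
        inner_smul_left, inner_smul_left, inner_smul_right, inner_smul_right, hff, hef, hfe, hee]
      simp
      ring
    rw [this, Complex.ofReal_re]
  obtain ⟨L, hL, hlim⟩ := lem2 U hU hU0 hUs (f - (a : ℂ) • e) Sj hne hS
  by_contra hcon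
  push Not at hcon
  have hle : L ≤ c - a ^ 2 := by
    refine le_of_tendsto' hlim fun j => ?_
    have hcd : (0 : ℝ) < (Sj j).card := by exact_mod_cast (hne j).card_pos
    rw [div_le_iff₀ hcd]
    refine (Finset.sum_le_card_nsmul _ _ (c - a ^ 2) fun g hg => ?_).trans ?_
    · rw [hvv]
      exact sub_le_sub_right (hcon g (hsub j hg)) _
    · rw [nsmul_eq_mul, mul_comm]
  have : c < a ^ 2 := hc
  linarith
end
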